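/- Let α ∈ (0,1) be real and let P_m(α) := Σ_{k=0}^m C(α,k). Then for every integer m ≥ 1 the value 2^α lies strictly between P_m(α) and P_{m+1}(α); that is, (P_m(α) − 2^α)·(P_{m+1}(α) − 2^α) < 0. -/

import Mathlib

/-- The generalized binomial coefficient `C(α,k) = α(α−1)⋯(α−k+1)/k!`. -/
noncomputable def genBinom (α : ℝ) (k : ℕ) : ℝ :=
  (∏ i ∈ Finset.range k, (α - i)) / (Nat.factorial k)

/-- The partial sum `P_m(α) = ∑_{k=0}^m C(α,k)`. -/
noncomputable def partialSum (α : ℝ) (m : ℕ) : ℝ :=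
  ∑ k ∈ Finset.range (m + 1), genBinom α k

/-!
By Taylor's theorem with the Lagrange remainder, `(1 + x) ^ α` exceeds its `m`-th binomial partial
sum by `C(α, m + 1) * ξ ^ (α - (m + 1)) * x ^ (m + 1)` for some `ξ` between `1` and `1 + x`. For
`0 < x` this has the sign of `C(α, m + 1)`, and consecutive coefficients have the ratio
`C(α, m + 2) / C(α, m + 1) = (α - (m + 1)) / (m + 2)`, which is negative once `α < m + 1`.
-/

open Set
open scoped Nat

theorem genBinom_succ (α : ℝ) (k : ℕ) :
    genBinom α (k + 1) = genBinom α k * ((α - k) / (k + 1)) := by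
  simp only [genBinom, Finset.prod_range_succ, Nat.factorial_succ]
  push_cast
  rw [mul_comm ((k : ℝ) + 1), mul_div_mul_comm]

theorem genBinom_ne_zero {α : ℝ} {k : ℕ} (hα : ∀ n < k, α ≠ n) : genBinom α k ≠ 0 :=
  div_ne_zero
    (Finset.prod_ne_zero_iff.2 fun i hi ↦ sub_ne_zero.2 (hα i (Finset.mem_range.1 hi)))
    (by positivity)

theorem genBinom_mul_genBinom_succ_neg {α : ℝ} {k : ℕ} (hα : ∀ n : ℕ, α ≠ n) (hk : α < k) :
    genBinom α k * genBinom α (k + 1) < 0 := by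
  rw [genBinom_succ, ← mul_assoc]
  exact mul_neg_of_pos_of_neg (mul_self_pos.2 (genBinom_ne_zero fun n _ ↦ hα n))
    (div_neg_of_neg_of_pos (sub_neg.2 hk) (by positivity))

theorem iteratedDeriv_rpow_const_eq_genBinom (α y : ℝ) (k : ℕ) :
    iteratedDeriv k (fun t : ℝ ↦ t ^ α) y = k ! * genBinom α k * y ^ (α - k) := by
  rw [iteratedDeriv_eq_iterate, Real.iter_deriv_rpow_const, descPochhammer_eval_eq_prod_range,
    genBinom, mul_div_cancel₀ _ (by positivity)]

theorem taylorWithinEval_rpow_const_one {s : Set ℝ} (hs : UniqueDiffOn ℝ s) (h1 : 1 ∈ s)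
    (α y : ℝ) (m : ℕ) :
    taylorWithinEval (fun t : ℝ ↦ t ^ α) m s 1 y =
      ∑ k ∈ Finset.range (m + 1), genBinom α k * (y - 1) ^ k := by
  rw [taylor_within_apply]
  refine Finset.sum_congr rfl fun k _ ↦ ?_
  rw [iteratedDerivWithin_eq_iteratedDeriv hs (Real.contDiffAt_rpow_const_of_ne one_ne_zero) h1,
    iteratedDeriv_rpow_const_eq_genBinom, Real.one_rpow, smul_eq_mul]
  field_simp

theorem exists_one_add_rpow_sub_sum_genBinom_eq {x : ℝ} (hx : -1 < x) (hx0 : x ≠ 0) (α : ℝ)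
    (m : ℕ) :
    ∃ ξ ∈ uIoo 1 (1 + x), (1 + x) ^ α - ∑ k ∈ Finset.range (m + 1), genBinom α k * x ^ k =
      genBinom α (m + 1) * ξ ^ (α - (m + 1)) * x ^ (m + 1) := by
  have hne : (1 : ℝ) ≠ 1 + x := by simpa using hx0
  have hsmooth : ContDiffOn ℝ (m + 1) (fun t : ℝ ↦ t ^ α) (uIcc 1 (1 + x)) := fun t ht ↦
    have ht0 : 0 < t := (lt_min one_pos (by linarith)).trans_le ht.1
    (Real.contDiffAt_rpow_const_of_ne ht0.ne').contDiffWithinAt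
  obtain ⟨ξ, hξ, hrem⟩ := taylor_mean_remainder_lagrange_iteratedDeriv hne hsmooth
  refine ⟨ξ, hξ, ?_⟩
  rw [taylorWithinEval_rpow_const_one (uniqueDiffOn_uIcc hne) left_mem_uIcc,
    iteratedDeriv_rpow_const_eq_genBinom, add_sub_cancel_left] at hrem
  rw [hrem]
  push_cast
  field_simp

theorem exists_pos_one_add_rpow_sub_sum_genBinom_eq {x : ℝ} (hx : 0 < x) (α : ℝ) (m : ℕ) :
    ∃ c > 0, (1 + x) ^ α - ∑ k ∈ Finset.range (m + 1), genBinom α k * x ^ k =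
      genBinom α (m + 1) * c := by
  obtain ⟨ξ, hξ, hrem⟩ :=
    exists_one_add_rpow_sub_sum_genBinom_eq (neg_one_lt_zero.trans hx) hx.ne' α m
  have hξ0 : 0 < ξ := (lt_min one_pos (by linarith)).trans hξ.1
  exact ⟨ξ ^ (α - (m + 1)) * x ^ (m + 1), by positivity, by rw [hrem, mul_assoc]⟩

theorem stmt_7_general {α x : ℝ} {m : ℕ} (hα : ∀ n : ℕ, α ≠ n) (hm : α < m + 1) (hx : 0 < x) :
    (∑ k ∈ Finset.range (m + 1), genBinom α k * x ^ k - (1 + x) ^ α) *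
      (∑ k ∈ Finset.range (m + 1 + 1), genBinom α k * x ^ k - (1 + x) ^ α) < 0 := by
  obtain ⟨c, hc, hrem⟩ := exists_pos_one_add_rpow_sub_sum_genBinom_eq hx α m
  obtain ⟨d, hd, hrem_succ⟩ := exists_pos_one_add_rpow_sub_sum_genBinom_eq hx α (m + 1)
  have hcoeff : genBinom α (m + 1) * genBinom α (m + 1 + 1) < 0 :=
    genBinom_mul_genBinom_succ_neg hα (by exact_mod_cast hm)
  rw [← neg_mul_neg, neg_sub, neg_sub, hrem, hrem_succ, mul_mul_mul_comm]
  exact mul_neg_of_neg_of_pos hcoeff (mul_pos hc hd)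

theorem ne_natCast_of_pos_of_lt_one {α : ℝ} (h0 : 0 < α) (h1 : α < 1) (n : ℕ) : α ≠ n := by
  rintro rfl
  exact (Nat.cast_pos.1 h0).ne' (Nat.cast_lt_one.1 h1)

theorem stmt_7 (α : ℝ) (h0 : 0 < α) (h1 : α < 1) :
    ∀ m : ℕ, 1 ≤ m →
      (partialSum α m - (2 : ℝ) ^ α) * (partialSum α (m + 1) - (2 : ℝ) ^ α) < 0 := by
  intro m _
  have hm : α < m + 1 := h1.trans_le (by simp)
  simpa [partialSum, one_add_one_eq_two] using
    stmt_7_general (ne_natCast_of_pos_of_lt_one h0 h1) hm one_pos
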